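/- Let f = (θ_1, …, θ_r) : ℝ^k → ℝ^r be a map whose components θ_1, …, θ_r are real polynomials in k variables, each of total degree at most d (with d ≥ 1). If y ∈ ℝ^r is a regular value of f, then the preimage f⁻¹(y) has at most d·(2d)^{k−1} connected components. -/

import Mathlib

/-!
Let `Z` be the zero set of `F = ∑ j, (θ j - y j) ^ 2`, of degree at most `D = 2 d`. The compact
sets `K t = {t F + ∑ i, x i ^ D ≤ R}` decrease to a part of `Z` as `t` grows, so for large `t` any
finitely many points in distinct components of `Z`, with `∑ i, x i ^ D < R`, lie in distinct
components of `K t`. On each of these components a fixed coordinate `x i₀` attains a maximum and a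
minimum, at two different points where `G = t F + ∑ i, x i ^ D - R` and all `∂G / ∂x i` with
`i ≠ i₀` vanish.

Subtracting multiples of the other equations from `G = 0` gives a system of the form
`x i ^ e i + (lower terms) + t q i = 0` with `e i₀ = D`, `e i = D - 1` otherwise and
`deg q i ≤ e i`. At `t = 0` division by the `i`-th
polynomial removes `X i ^ e i`, so the monomials with exponents below `e i` span the polynomials
of bounded degree modulo the system. This is a surjectivity statement between finite-dimensional
spaces and persists for all but finitely many `t`. For these `t` polynomials of bounded degree take
all values on finite sets of solutions, whence at most `∏ i, e i = D (D - 1) ^ (k - 1)` solutions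
and at most half as many components of `Z`.
-/

open Filter Function Module MvPolynomial Topology

section LinearAlgebra

variable {K V E : Type*} [Field K] [AddCommGroup V] [Module K V] [AddCommGroup E] [Module K E]

theorem eventually_cofinite_surjective_one_add_smul [FiniteDimensional K V] (h : End K V) :
    ∀ᶠ t : K in cofinite, Surjective (1 + t • h : End K V) := by
  have hinj : Injective fun t : K ↦ -t⁻¹ := neg_injective.comp inv_injective
  filter_upwards [hinj.tendsto_cofinite.eventually h.finite_spectrum.eventually_cofinite_notMem]
    with t ht
  rcases eq_or_ne t 0 with rfl | ht₀
  · simpa using! surjective_id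
  have hunit : IsUnit (-t • (algebraMap K (End K V) (-t⁻¹) - h)) :=
    (spectrum.notMem_iff.mp ht).smul (Units.mk0 (-t) (neg_ne_zero.mpr ht₀))
  have heq : -t • (algebraMap K (End K V) (-t⁻¹) - h) = 1 + t • h := by
    rw [Algebra.algebraMap_eq_smul_one, smul_sub, smul_smul, neg_mul_neg, mul_inv_cancel₀ ht₀,
      one_smul, neg_smul, sub_neg_eq_add]
  exact ((End.isUnit_iff _).mp (heq ▸ hunit)).surjective

theorem eventually_cofinite_le_range_add_smul {U : Submodule K E} [FiniteDimensional K U]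
    {f g : V →ₗ[K] E} (hf : U ≤ f.range) (hg : g.range ≤ U) :
    ∀ᶠ t : K in cofinite, U ≤ (f + t • g).range := by
  obtain ⟨s, hs⟩ : ∃ s : U →ₗ[K] V, f ∘ₗ s = U.subtype := by
    obtain ⟨s, hs⟩ := f.rangeRestrict.exists_rightInverse_of_surjective f.range_rangeRestrict
    refine ⟨s ∘ₗ Submodule.inclusion hf, LinearMap.ext fun u ↦ ?_⟩
    exact congrArg Subtype.val (LinearMap.congr_fun hs (Submodule.inclusion hf u))
  let h : End K U := (g ∘ₗ s).codRestrict U fun u ↦ hg ⟨s u, rfl⟩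
  filter_upwards [eventually_cofinite_surjective_one_add_smul h] with t ht u hu
  obtain ⟨v, hv⟩ := ht ⟨u, hu⟩
  refine ⟨s v, ?_⟩
  calc (f + t • g) (s v) = ((1 + t • h) v : U) := by
        simpa [h] using LinearMap.congr_fun hs v
    _ = u := congrArg Subtype.val hv

end LinearAlgebra

section Division

variable {σ R : Type*} [CommRing R]

/-- The exponents of the monomials not divisible by any `X i ^ e i`. -/
def boxExponents (e : σ → ℕ) : Set (σ →₀ ℕ) := {m | ∀ i, m i < e i}

/-- A monomial not divisible by any `X i ^ e i` amounts to a choice of an exponent below `e i` for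
each `i`. -/
noncomputable def boxExponentsEquiv [Finite σ] (e : σ → ℕ) : boxExponents e ≃ ∀ i, Fin (e i) :=
  (Finsupp.equivFunOnFinite.subtypeEquiv fun _ ↦ Iff.rfl).trans
    ((Equiv.subtypePiEquivPi (p := fun i k ↦ k < e i)).trans
      (Equiv.piCongrRight fun _ ↦ Fin.equivSubtype.symm))

theorem mem_of_forall_monomial_mem {M : Submodule R (MvPolynomial σ R)} {f : MvPolynomial σ R}
    (hM : ∀ m : σ →₀ ℕ, m.degree ≤ f.totalDegree → monomial m 1 ∈ M) : f ∈ M := by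
  rw [f.as_sum]
  refine sum_mem fun m hm ↦ ?_
  rw [← mul_one (coeff m f), ← smul_eq_mul, ← smul_monomial]
  exact M.smul_mem _ (hM m (le_totalDegree hm))

/-- The linear map `h ↦ ∑ i, h i * p i` on families of polynomials `h i` of total degree at most
`a i`; the degree bounds keep its range inside the polynomials of bounded degree. -/
noncomputable def boundedCombination [Fintype σ] (a : σ → ℕ) (p : σ → MvPolynomial σ R) :
    (∀ i, restrictTotalDegree σ R (a i)) →ₗ[R] MvPolynomial σ R :=
  ∑ i, LinearMap.mulRight R (p i) ∘ₗ (restrictTotalDegree σ R (a i)).subtype ∘ₗ LinearMap.proj i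

variable [Fintype σ] {a e : σ → ℕ} {n : ℕ} {p q : σ → MvPolynomial σ R}

theorem boundedCombination_apply (h : ∀ i, restrictTotalDegree σ R (a i)) :
    boundedCombination a p h = ∑ i, (h i : MvPolynomial σ R) * p i := by
  simp [boundedCombination]

theorem boundedCombination_add_smul (t : R) :
    boundedCombination a (p + t • q) = boundedCombination a p + t • boundedCombination a q := by
  ext h : 1
  simp [boundedCombination_apply, mul_add, Finset.sum_add_distrib, Finset.smul_sum]

theorem boundedCombination_mem_ideal_span (h : ∀ i, restrictTotalDegree σ R (a i)) :
    boundedCombination a p h ∈ Ideal.span (Set.range p) := by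
  rw [boundedCombination_apply]
  exact sum_mem fun i _ ↦ Ideal.mul_mem_left _ _ (Ideal.subset_span ⟨i, rfl⟩)

theorem range_boundedCombination_le (hn : ∀ i, e i ≤ n) (hq : ∀ i, (q i).totalDegree ≤ e i) :
    (boundedCombination (fun i ↦ n - e i) q).range ≤ restrictTotalDegree σ R n := by
  rintro _ ⟨h, rfl⟩
  rw [boundedCombination_apply]
  refine sum_mem fun i _ ↦ (mem_restrictTotalDegree _ _ _).mpr ?_
  calc ((h i : MvPolynomial σ R) * q i).totalDegree
      ≤ (h i : MvPolynomial σ R).totalDegree + (q i).totalDegree := totalDegree_mul _ _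
    _ ≤ (n - e i) + e i := add_le_add ((mem_restrictTotalDegree _ _ _).mp (h i).2) (hq i)
    _ = n := Nat.sub_add_cancel (hn i)

theorem monomial_mul_mem_range_boundedCombination (i : σ) {m : σ →₀ ℕ} (hm : m.degree ≤ a i) :
    monomial m 1 * p i ∈ (boundedCombination a p).range := by
  classical
  have hmem : monomial m (1 : R) ∈ restrictTotalDegree σ R (a i) :=
    (mem_restrictTotalDegree _ _ _).mpr ((totalDegree_monomial_le m 1).trans hm)
  refine ⟨Pi.single i ⟨monomial m 1, hmem⟩, ?_⟩
  rw [boundedCombination_apply, Finset.sum_eq_single_of_mem i (Finset.mem_univ i)]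
  · simp
  · intro j _ hj
    simp [hj]

theorem restrictTotalDegree_le_restrictSupport_sup_range
    (hp : ∀ i, (p i - X i ^ e i).totalDegree < e i) :
    restrictTotalDegree σ R n ≤ restrictSupport R (boxExponents e) ⊔
      (boundedCombination (fun i ↦ n - e i) p).range := by
  set M := restrictSupport R (boxExponents e) ⊔ (boundedCombination (fun i ↦ n - e i) p).range
  suffices hM : ∀ m : σ →₀ ℕ, m.degree ≤ n → monomial m 1 ∈ M from fun f hf ↦
    mem_of_forall_monomial_mem fun m hm ↦ hM m (hm.trans ((mem_restrictTotalDegree _ _ _).mp hf))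
  intro m hmn
  induction hd : m.degree using Nat.strong_induction_on generalizing m with
  | _ d ih =>
  subst hd
  by_cases hbox : m ∈ boxExponents e
  · exact Submodule.mem_sup_left ((monomial_mem_restrictSupport R).mpr (.inl hbox))
  obtain ⟨i, hi⟩ : ∃ i, e i ≤ m i := by simpa [boxExponents] using hbox
  obtain ⟨m', rfl⟩ := exists_add_of_le (Finsupp.single_le_iff.mpr hi)
  have hdeg : (Finsupp.single i (e i) + m').degree = e i + m'.degree := by
    rw [map_add, Finsupp.degree_single]
  have hleading : monomial (Finsupp.single i (e i) + m') (1 : R) =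
      monomial m' 1 * p i - monomial m' 1 * (p i - X i ^ e i) := by
    rw [X_pow_eq_monomial, mul_sub, sub_sub_cancel, monomial_mul, one_mul, add_comm]
  have hlower : (monomial m' 1 * (p i - X i ^ e i)).totalDegree < e i + m'.degree := by
    have := totalDegree_mul (monomial m' 1) (p i - X i ^ e i)
    have : (monomial m' (1 : R)).totalDegree ≤ m'.degree := totalDegree_monomial_le m' 1
    have := hp i
    omega
  rw [hleading]
  refine sub_mem (Submodule.mem_sup_right ?_) (mem_of_forall_monomial_mem fun m hm ↦ ?_)
  · exact monomial_mul_mem_range_boundedCombination i (by omega)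
  · exact ih m.degree (by omega) m (by omega) rfl

end Division

section Bezout

variable {σ K : Type*} [Field K]

theorem exists_totalDegree_le_one_eval_eq {x y : σ → K} (hxy : x ≠ y) :
    ∃ p : MvPolynomial σ K, p.totalDegree ≤ 1 ∧ eval x p = 1 ∧ eval y p = 0 := by
  obtain ⟨i, hi⟩ := ne_iff.mp hxy
  refine ⟨C (x i - y i)⁻¹ * (X i - C (y i)), ?_, ?_, by simp⟩
  · calc (C (x i - y i)⁻¹ * (X i - C (y i))).totalDegree ≤ 0 + (X i - C (y i)).totalDegree := by
          simpa using totalDegree_mul (C (x i - y i)⁻¹) (X i - C (y i))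
      _ ≤ 1 := by simpa using totalDegree_sub_C_le (X i) (y i)
  · simp [sub_ne_zero.mpr hi]

theorem exists_totalDegree_le_card_eval_eq (S : Finset (σ → K)) (g : (σ → K) → K) :
    ∃ p : MvPolynomial σ K, p.totalDegree ≤ S.card ∧ ∀ x ∈ S, eval x p = g x := by
  classical
  have hsep (x y : σ → K) : ∃ p : MvPolynomial σ K,
      p.totalDegree ≤ 1 ∧ (x ≠ y → eval x p = 1 ∧ eval y p = 0) := by
    by_cases hxy : x = y
    · exact ⟨0, by simp, (absurd hxy ·)⟩
    · obtain ⟨p, hp, hp'⟩ := exists_totalDegree_le_one_eval_eq hxy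
      exact ⟨p, hp, fun _ ↦ hp'⟩
  choose l hdeg hl using hsep
  refine ⟨∑ x ∈ S, C (g x) * ∏ y ∈ S.erase x, l x y, totalDegree_finsetSum_le fun x _ ↦ ?_,
    fun x hx ↦ ?_⟩
  · calc (C (g x) * ∏ y ∈ S.erase x, l x y).totalDegree
        ≤ 0 + (∏ y ∈ S.erase x, l x y).totalDegree := by
          simpa using totalDegree_mul (C (g x)) (∏ y ∈ S.erase x, l x y)
      _ ≤ ∑ y ∈ S.erase x, (l x y).totalDegree := by
          simpa using totalDegree_finsetProd (S.erase x) (l x)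
      _ ≤ (S.erase x).card := by simpa using Finset.sum_le_card_nsmul _ _ 1 fun y _ ↦ hdeg x y
      _ ≤ S.card := Finset.card_erase_le
  · rw [map_sum, Finset.sum_eq_single_of_mem x hx]
    · rw [map_mul, eval_C, map_prod, Finset.prod_eq_one, mul_one]
      exact fun y hy ↦ (hl x y (Finset.ne_of_mem_erase hy).symm).1
    · intro y _ hyx
      rw [map_mul, map_prod, Finset.prod_eq_zero (Finset.mem_erase.mpr ⟨hyx.symm, hx⟩),
        mul_zero]
      exact (hl y x hyx).2

theorem card_le_prod_of_forall_exists_eval_eq [Fintype σ] {e : σ → ℕ} {S : Finset (σ → K)}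
    (hS : ∀ p : MvPolynomial σ K, p.totalDegree ≤ S.card →
      ∃ r ∈ restrictSupport K (boxExponents e), ∀ x ∈ S, eval x p = eval x r) :
    S.card ≤ ∏ i, e i := by
  have _ := Finite.of_equiv _ (boxExponentsEquiv e).symm
  have : Module.Finite K (restrictSupport K (boxExponents e)) :=
    .of_basis (basisRestrictSupport K (boxExponents e))
  let ev : restrictSupport K (boxExponents e) →ₗ[K] (S → K) :=
    LinearMap.pi fun x ↦ (aeval (R := K) (x : σ → K)).toLinearMap ∘ₗ Submodule.subtype _
  have hev : Surjective ev := by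
    intro g
    obtain ⟨p, hpS, hp⟩ := exists_totalDegree_le_card_eval_eq S (extend Subtype.val g 0)
    obtain ⟨r, hr, hpr⟩ := hS p hpS
    refine ⟨⟨r, hr⟩, funext fun x ↦ ?_⟩
    calc ev ⟨r, hr⟩ x = eval (x : σ → K) r := rfl
      _ = g x := by rw [← hpr x x.2, hp x x.2, Subtype.val_injective.extend_apply]
  calc S.card = finrank K (S → K) := by simp
    _ ≤ finrank K (restrictSupport K (boxExponents e)) :=
        LinearMap.finrank_le_finrank_of_surjective hev
    _ = ∏ i, e i := by
        rw [finrank_eq_nat_card_basis (basisRestrictSupport K _),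
          Nat.card_congr (boxExponentsEquiv e)]
        simp [Nat.card_pi]

variable {e : σ → ℕ} {n : ℕ} {p q : σ → MvPolynomial σ K}

theorem eventually_cofinite_forall_exists_sub_mem_ideal_span [Finite σ] (hn : ∀ i, e i ≤ n)
    (hp : ∀ i, (p i - X i ^ e i).totalDegree < e i) (hq : ∀ i, (q i).totalDegree ≤ e i) :
    ∀ᶠ t : K in cofinite, ∀ f : MvPolynomial σ K, f.totalDegree ≤ n →
      ∃ r ∈ restrictSupport K (boxExponents e), f - r ∈ Ideal.span (Set.range (p + t • q)) := by
  have := Fintype.ofFinite σ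
  set B := restrictSupport K (boxExponents e)
  set Φ := boundedCombination (R := K) fun i ↦ n - e i
  have hp_range : restrictTotalDegree σ K n ≤ (B.subtype.coprod (Φ p)).range := by
    rw [LinearMap.range_coprod, Submodule.range_subtype]
    exact restrictTotalDegree_le_restrictSupport_sup_range hp
  have hq_range : (LinearMap.coprod (0 : B →ₗ[K] _) (Φ q)).range ≤ restrictTotalDegree σ K n := by
    rw [LinearMap.range_coprod, LinearMap.range_zero, bot_sup_eq]
    exact range_boundedCombination_le hn hq
  filter_upwards [eventually_cofinite_le_range_add_smul hp_range hq_range] with t ht f hf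
  obtain ⟨⟨r, h⟩, rfl⟩ := ht ((mem_restrictTotalDegree _ _ _).mpr hf)
  refine ⟨r, r.2, ?_⟩
  convert! boundedCombination_mem_ideal_span (p := p + t • q) h using 1
  simp [Φ, boundedCombination_add_smul, add_assoc]

theorem eventually_cofinite_encard_zeros_le_prod [Fintype σ]
    (hp : ∀ i, (p i - X i ^ e i).totalDegree < e i) (hq : ∀ i, (q i).totalDegree ≤ e i) :
    ∀ᶠ t : K in cofinite,
      {x : σ → K | ∀ i, eval x (p i + t • q i) = 0}.encard ≤ (∏ i, e i : ℕ) := by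
  have hn (i : σ) : e i ≤ ∏ i, e i + 1 :=
    (Nat.le_of_dvd (Finset.prod_pos fun j _ ↦ (hp j).pos) (Finset.dvd_prod_of_mem e
      (Finset.mem_univ i))).trans (Nat.le_succ _)
  filter_upwards [eventually_cofinite_forall_exists_sub_mem_ideal_span hn hp hq] with t ht
  by_contra! hcard
  obtain ⟨S, hS, hScard⟩ := Set.exists_subset_encard_eq (Order.add_one_le_of_lt hcard)
  lift S to Finset (σ → K) using
    Set.finite_of_encard_eq_coe (k := ∏ i, e i + 1) (by simpa using hScard)
  replace hScard : S.card = ∏ i, e i + 1 := by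
    rw [Set.encard_coe_eq_coe_finsetCard] at hScard
    exact_mod_cast hScard
  have hle : S.card ≤ ∏ i, e i := by
    refine card_le_prod_of_forall_exists_eval_eq fun f hf ↦ ?_
    obtain ⟨r, hr, hfr⟩ := ht f (hf.trans_eq hScard)
    refine ⟨r, hr, fun x hx ↦ sub_eq_zero.mp ?_⟩
    have hker : Ideal.span (Set.range (p + t • q)) ≤ RingHom.ker (eval x) :=
      Ideal.span_le.mpr (Set.range_subset_iff.mpr (hS hx))
    simpa using hker hfr
  omega

end Bezout

section Calculus

theorem totalDegree_pderiv_le {σ R : Type*} [CommSemiring R] (i : σ) (p : MvPolynomial σ R) :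
    (pderiv i p).totalDegree ≤ p.totalDegree - 1 := by
  refine Finset.sup_le fun m hm ↦ Nat.le_sub_of_add_le ?_
  have hcoeff : coeff (m + Finsupp.single i 1) p ≠ 0 := by
    rw [MvPolynomial.mem_support_iff, coeff_pderiv] at hm
    exact left_ne_zero_of_mul hm
  calc m.degree + 1 = (m + Finsupp.single i 1).degree := by
        rw [map_add, Finsupp.degree_single]
    _ ≤ p.totalDegree := le_totalDegree (MvPolynomial.mem_support_iff.mpr hcoeff)

theorem hasFDerivAt_mvPolynomial_eval {σ 𝕜 : Type*} [Fintype σ] [NontriviallyNormedField 𝕜]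
    (p : MvPolynomial σ 𝕜) (x : σ → 𝕜) :
    HasFDerivAt (fun x : σ → 𝕜 ↦ eval x p)
      (∑ i, eval x (pderiv i p) • (ContinuousLinearMap.proj i : (σ → 𝕜) →L[𝕜] 𝕜)) x := by
  classical
  induction p using MvPolynomial.induction_on with
  | C a =>
    simp only [eval_C]
    exact (hasFDerivAt_const a x).congr_fderiv (ContinuousLinearMap.ext fun v ↦ by simp)
  | add p q hp hq =>
    simp only [map_add]
    exact (hp.fun_add hq).congr_fderiv
      (ContinuousLinearMap.ext fun v ↦ by simp [add_mul, Finset.sum_add_distrib])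
  | mul_X p j hp =>
    simp only [map_mul, eval_X]
    refine (hp.fun_mul (hasFDerivAt_apply j x)).congr_fderiv (ContinuousLinearMap.ext fun v ↦ ?_)
    simp [pderiv_X, Pi.single_apply, apply_ite (MvPolynomial.eval x), add_mul,
      Finset.sum_add_distrib, Finset.mul_sum, mul_assoc]

end Calculus

section ConnectedComponents

variable {X : Type*} [TopologicalSpace X]

theorem disjoint_connectedComponentIn {Z : Set X} {x y : X}
    (h : connectedComponentIn Z x ≠ connectedComponentIn Z y) :
    Disjoint (connectedComponentIn Z x) (connectedComponentIn Z y) :=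
  Set.disjoint_left.mpr fun _ hx hy ↦
    h ((connectedComponentIn_eq hx).trans (connectedComponentIn_eq hy).symm)

theorem isPreconnected_iInter_of_directed [T2Space X] {ι : Type*} [Nonempty ι] {K : ι → Set X}
    (hdir : Directed (· ⊇ ·) K) (hcomp : ∀ i, IsCompact (K i)) (hK : ∀ i, IsPreconnected (K i)) :
    IsPreconnected (⋂ i, K i) := by
  have hclosed : IsClosed (⋂ i, K i) := isClosed_iInter fun i ↦ (hcomp i).isClosed
  have hcompact : IsCompact (⋂ i, K i) :=
    (hcomp (Classical.arbitrary ι)).of_isClosed_subset hclosed (Set.iInter_subset _ _)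
  refine (isPreconnected_iff_subset_of_fully_disjoint_closed hclosed).mpr
    fun A B hA hB hAB hdisj ↦ ?_
  obtain ⟨U, V, hU, hV, hAU, hBV, hUV⟩ := SeparatedNhds.of_isCompact_isCompact
    (hcompact.inter_right hA) (hcompact.inter_right hB)
    (hdisj.mono Set.inter_subset_right Set.inter_subset_right)
  have hsub : ⋂ i, K i ⊆ U ∪ V := fun x hx ↦
    (hAB hx).imp (fun h ↦ hAU ⟨hx, h⟩) fun h ↦ hBV ⟨hx, h⟩
  obtain ⟨i, hi⟩ := exists_subset_nhds_of_isCompact hdir hcomp fun x hx ↦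
    (hU.union hV).mem_nhds (hsub hx)
  rcases (hK i).subset_or_subset hU hV hUV hi with h | h
  · refine .inl fun x hx ↦ (hAB hx).resolve_right fun hxB ↦ ?_
    exact hUV.notMem_of_mem_left (h (Set.mem_iInter.mp hx i)) (hBV ⟨hx, hxB⟩)
  · refine .inr fun x hx ↦ (hAB hx).resolve_left fun hxA ↦ ?_
    exact hUV.notMem_of_mem_left (hAU ⟨hx, hxA⟩) (h (Set.mem_iInter.mp hx i))

theorem isClosed_connectedComponentIn {K : Set X} (hK : IsClosed K) (x : X) :
    IsClosed (connectedComponentIn K x) := by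
  by_cases hx : x ∈ K
  · rw [connectedComponentIn_eq_image hx]
    exact hK.isClosedEmbedding_subtypeVal.isClosedMap _ isClosed_connectedComponent
  · simp [connectedComponentIn_eq_empty hx]

theorem iInter_connectedComponentIn_subset [T2Space X] {ι : Type*} [Nonempty ι] [Preorder ι]
    [IsDirectedOrder ι] {K : ι → Set X} (hanti : Antitone K) (hcomp : ∀ i, IsCompact (K i))
    {x : X} (hx : ∀ i, x ∈ K i) :
    ⋂ i, connectedComponentIn (K i) x ⊆ connectedComponentIn (⋂ i, K i) x := by
  have hpre : IsPreconnected (⋂ i, connectedComponentIn (K i) x) :=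
    isPreconnected_iInter_of_directed
      (Antitone.directed_ge fun i j hij ↦ connectedComponentIn_mono x (hanti hij))
      (fun i ↦ (hcomp i).of_isClosed_subset
        (isClosed_connectedComponentIn (hcomp i).isClosed x) (connectedComponentIn_subset _ _))
      fun i ↦ isPreconnected_connectedComponentIn
  exact hpre.subset_connectedComponentIn
    (Set.mem_iInter.mpr fun i ↦ mem_connectedComponentIn (hx i))
    (Set.iInter_mono fun i ↦ connectedComponentIn_subset _ _)

theorem eventually_injOn_connectedComponentIn [T2Space X] {ι : Type*} [Nonempty ι] [Preorder ι]
    [IsDirectedOrder ι] {K : ι → Set X} (hanti : Antitone K) (hcomp : ∀ i, IsCompact (K i))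
    {S : Finset X} (hS : ↑S ⊆ ⋂ i, K i) (hinj : Set.InjOn (connectedComponentIn (⋂ i, K i)) S) :
    ∀ᶠ i in atTop, Set.InjOn (connectedComponentIn (K i)) S := by
  suffices h : ∀ x ∈ S, ∀ y ∈ S, ∀ᶠ i in atTop,
      connectedComponentIn (K i) x = connectedComponentIn (K i) y → x = y by
    simp only [Set.InjOn, Finset.mem_coe]
    filter_upwards [(eventually_all_finset S).mpr fun x hx ↦ (eventually_all_finset S).mpr (h x hx)]
      with i hi x hx y hy
    exact hi x hx y hy
  intro x hx y hy
  by_cases hxy : x = y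
  · simp [hxy]
  have hy_mem (i : ι) : y ∈ K i := Set.mem_iInter.mp (hS hy) i
  obtain ⟨i, hi⟩ : ∃ i, y ∉ connectedComponentIn (K i) x := by
    by_contra! h
    exact hxy (hinj hx hy (connectedComponentIn_eq (iInter_connectedComponentIn_subset hanti hcomp
      (fun i ↦ Set.mem_iInter.mp (hS hx) i) (Set.mem_iInter.mpr h))))
  filter_upwards [eventually_ge_atTop i] with j hij heq
  refine absurd (connectedComponentIn_mono x (hanti hij) ?_) hi
  exact heq ▸ mem_connectedComponentIn (hy_mem j)

theorem injOn_connectedComponentIn_mono {S T Z : Set X} (hST : S ⊆ T) (hTZ : T ⊆ Z)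
    (hinj : Set.InjOn (connectedComponentIn Z) S) : Set.InjOn (connectedComponentIn T) S := by
  intro x hx y hy hxy
  refine hinj hx hy (connectedComponentIn_eq (connectedComponentIn_mono x hTZ ?_))
  exact hxy ▸ mem_connectedComponentIn (hST hy)

theorem finite_and_card_connectedComponents_le {Z : Set X} {N : ℕ}
    (hN : ∀ S : Finset X, ↑S ⊆ Z → Set.InjOn (connectedComponentIn Z) S → S.card ≤ N) :
    Finite (ConnectedComponents Z) ∧ Nat.card (ConnectedComponents Z) ≤ N := by
  classical
  let rep : ConnectedComponents Z → X := fun c ↦ (surjInv ConnectedComponents.surjective_coe c : Z)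
  have hrep (c : ConnectedComponents Z) :
      connectedComponentIn Z (rep c) =
        (↑) '' connectedComponent (surjInv ConnectedComponents.surjective_coe c) :=
    connectedComponentIn_eq_image (Subtype.prop _)
  have hinj : Injective fun c ↦ connectedComponentIn Z (rep c) := by
    intro c c' h
    simp only [hrep, Subtype.val_injective.image_injective.eq_iff] at h
    simpa [surjInv_eq] using ConnectedComponents.coe_eq_coe.mpr h
  have hcard (T : Finset (ConnectedComponents Z)) : T.card ≤ N := by
    rw [← Finset.card_image_of_injective T (f := rep) (hinj.of_comp (f := connectedComponentIn Z))]
    refine hN _ ?_ ?_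
    · simp [Set.subset_def, rep]
    · rw [Finset.coe_image]
      exact (hinj.injOn).image_of_comp
  have hfin : Finite (ConnectedComponents Z) :=
    Cardinal.lt_aleph0_iff_finite.mp
      ((Cardinal.card_le_of hcard).trans_lt (Cardinal.natCast_lt_aleph0))
  have := Fintype.ofFinite (ConnectedComponents Z)
  exact ⟨hfin, Nat.card_eq_fintype_card.trans_le (hcard Finset.univ)⟩

end ConnectedComponents

section Sublevel

variable {E : Type*} [NormedAddCommGroup E] [NormedSpace ℝ E]

theorem exists_add_smul_mem_connectedComponentIn {K : Set E} {x p v : E}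
    (hp : p ∈ connectedComponentIn K x) (hv : ∀ᶠ s : ℝ in 𝓝[>] 0, p + s • v ∈ K) :
    ∃ s : ℝ, 0 < s ∧ p + s • v ∈ connectedComponentIn K x := by
  obtain ⟨s, hs, hsK⟩ := mem_nhdsGT_iff_exists_Ioc_subset.mp hv
  have hpre : IsPreconnected ((fun s : ℝ ↦ p + s • v) '' Set.Icc 0 s) :=
    isPreconnected_Icc.image _ (by fun_prop)
  refine ⟨s, hs, connectedComponentIn_eq hp ▸ hpre.subset_connectedComponentIn
    ⟨0, Set.left_mem_Icc.mpr hs.le, by simp⟩ ?_ ⟨s, Set.right_mem_Icc.mpr hs.le, rfl⟩⟩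
  rintro _ ⟨t, ⟨ht₀, hts⟩, rfl⟩
  rcases ht₀.eq_or_lt with rfl | ht₀
  · simpa using connectedComponentIn_subset _ _ hp
  · exact hsK ⟨ht₀, hts⟩

variable {K : Set E} {ℓ : Dual ℝ E} {x p v : E} {G : E → ℝ} {G' : E →L[ℝ] ℝ}

theorem apply_nonpos_of_isMaxOn_connectedComponentIn (hp : p ∈ connectedComponentIn K x)
    (hmax : IsMaxOn ℓ (connectedComponentIn K x) p) (hv : ∀ᶠ s : ℝ in 𝓝[>] 0, p + s • v ∈ K) :
    ℓ v ≤ 0 := by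
  obtain ⟨s, hs, hmem⟩ := exists_add_smul_mem_connectedComponentIn hp hv
  have hle : ℓ (p + s • v) ≤ ℓ p := hmax hmem
  rw [map_add, map_smul, smul_eq_mul, add_le_iff_nonpos_right] at hle
  exact nonpos_of_mul_nonpos_right hle hs

theorem eventually_apply_add_smul_nonpos (hG : HasFDerivAt G G' p) (hp : G p = 0)
    (hv : G' v < 0) : ∀ᶠ s : ℝ in 𝓝[>] 0, G (p + s • v) ≤ 0 := by
  have hslope := (hG.hasLineDerivAt v).tendsto_slope_zero_right
  filter_upwards [hslope.eventually_lt_const hv, self_mem_nhdsWithin] with s hs hs₀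
  simp only [hp, sub_zero, smul_eq_mul] at hs
  exact (neg_of_mul_neg_right hs (inv_nonneg.mpr (le_of_lt hs₀))).le

theorem eq_zero_of_isMaxOn_connectedComponentIn_sublevel (hG : Continuous G) (hℓ : ℓ ≠ 0)
    (hp : p ∈ connectedComponentIn {x | G x ≤ 0} x)
    (hmax : IsMaxOn ℓ (connectedComponentIn {x | G x ≤ 0} x) p) : G p = 0 := by
  by_contra hne
  have hlt : G p < 0 := (connectedComponentIn_subset {x | G x ≤ 0} _ hp).lt_of_ne hne
  have hle (v : E) : ℓ v ≤ 0 := by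
    refine apply_nonpos_of_isMaxOn_connectedComponentIn hp hmax (.filter_mono nhdsWithin_le_nhds ?_)
    have hcont : Continuous fun s : ℝ ↦ G (p + s • v) := by fun_prop
    filter_upwards [hcont.continuousAt.eventually_lt_const (by simpa using hlt)] with s hs
    exact hs.le
  exact hℓ (LinearMap.ext fun v ↦ (hle v).antisymm (by simpa using hle (-v)))

theorem ker_le_ker_of_isMaxOn_connectedComponentIn_sublevel (hG : HasFDerivAt G G' p)
    (hGp : G p = 0) (hℓ : ℓ ≠ 0) (hp : p ∈ connectedComponentIn {x | G x ≤ 0} x)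
    (hmax : IsMaxOn ℓ (connectedComponentIn {x | G x ≤ 0} x) p) : ℓ.ker ≤ G'.ker := by
  intro w hw
  by_contra hne
  obtain ⟨v, hv⟩ : ∃ v, ℓ v = 1 := LinearMap.surjective hℓ 1
  have hneg : G' (v - ((G' v + 1) / G' w) • w) < 0 := by
    have : (G' v + 1) / G' w * G' w = G' v + 1 := div_mul_cancel₀ _ hne
    simp [this]
  have hle := apply_nonpos_of_isMaxOn_connectedComponentIn hp hmax
    (eventually_apply_add_smul_nonpos hG hGp hneg)
  rw [map_sub, map_smul, hv, LinearMap.mem_ker.mp hw, smul_zero, sub_zero] at hle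
  exact one_pos.not_ge hle

end Sublevel
section CriticalPoints

variable {σ K : Type*} [Field K]

/-- The zeros of `G` at which no coordinate direction other than that of `i₀` changes `G` to first
order: the critical points of the coordinate `x i₀` on the hypersurface `G = 0`, together with the
singular points of the hypersurface. -/
def coordCriticalSet (i₀ : σ) (G : MvPolynomial σ K) : Set (σ → K) :=
  {x | eval x G = 0 ∧ ∀ i ≠ i₀, eval x (pderiv i G) = 0}

/-- The polynomial `t F + ∑ i, X i ^ D - R`. Over the reals, for even `D` and `F ≥ 0`, the sets
where it is nonpositive are compact and decrease with `t` to the part of the zero set of `F` in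
`∑ i, x i ^ D ≤ R`. -/
noncomputable def penalization [Fintype σ] (D : ℕ) (R : K) (F : MvPolynomial σ K) (t : K) :
    MvPolynomial σ K :=
  t • F + psum σ K D - C R

variable [Fintype σ] {D : ℕ} {R t : K} {F : MvPolynomial σ K} {i₀ : σ} {x : σ → K}

theorem eval_penalization : eval x (penalization D R F t) = t * eval x F + ∑ i, x i ^ D - R := by
  simp [penalization, psum]

theorem eval_pderiv_penalization (i : σ) :
    eval x (pderiv i (penalization D R F t)) = t * eval x (pderiv i F) + D * x i ^ (D - 1) := by
  classical
  simp [penalization, psum, pderiv_X, Pi.single_apply]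

theorem pow_add_eq_zero_of_mem_coordCriticalSet (hD : (D : K) ≠ 0)
    (hx : x ∈ coordCriticalSet i₀ (penalization D R F t)) {i : σ} (hi : i ≠ i₀) :
    x i ^ (D - 1) + t * ((D : K)⁻¹ * eval x (pderiv i F)) = 0 := by
  have h := hx.2 i hi
  rw [eval_pderiv_penalization] at h
  field_simp
  linear_combination h

/-- Subtracting `x j / D` times the `j`-th derivative for every `j ≠ i₀` leaves `x i₀ ^ D` as the
only term of degree `D` that is not multiplied by `t`. -/
theorem pow_sub_add_eq_zero_of_mem_coordCriticalSet [DecidableEq σ] (hD : (D : K) ≠ 0)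
    (hx : x ∈ coordCriticalSet i₀ (penalization D R F t)) :
    x i₀ ^ D - R + t * (eval x F -
      ∑ j ∈ Finset.univ.erase i₀, x j * ((D : K)⁻¹ * eval x (pderiv j F))) = 0 := by
  have hD₀ : D ≠ 0 := fun h ↦ hD (by simp [h])
  have hpow : ∀ j ∈ Finset.univ.erase i₀,
      x j ^ D = -(t * (x j * ((D : K)⁻¹ * eval x (pderiv j F)))) := fun j hj ↦ by
    rw [← mul_pow_sub_one hD₀ (x j)]
    linear_combination
      x j * pow_add_eq_zero_of_mem_coordCriticalSet hD hx (Finset.ne_of_mem_erase hj)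
  have h := hx.1
  rw [eval_penalization, ← Finset.add_sum_erase _ _ (Finset.mem_univ i₀),
    Finset.sum_congr rfl hpow, Finset.sum_neg_distrib, ← Finset.mul_sum] at h
  linear_combination h

theorem eventually_cofinite_encard_coordCriticalSet_le (hD : (D : K) ≠ 0) (hD₁ : 1 < D)
    (hF : F.totalDegree ≤ D) (R : K) (i₀ : σ) :
    ∀ᶠ t : K in cofinite, (coordCriticalSet i₀ (penalization D R F t)).encard ≤
      (D * (D - 1) ^ (Fintype.card σ - 1) : ℕ) := by
  classical
  have hpderiv (i : σ) : (C (D : K)⁻¹ * pderiv i F).totalDegree ≤ D - 1 :=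
    calc (C (D : K)⁻¹ * pderiv i F).totalDegree ≤ 0 + (pderiv i F).totalDegree := by
          simpa using totalDegree_mul (C (D : K)⁻¹) (pderiv i F)
      _ ≤ D - 1 := by have := totalDegree_pderiv_le i F; omega
  let e : σ → ℕ := update (fun _ ↦ D - 1) i₀ D
  let p : σ → MvPolynomial σ K := update (fun i ↦ X i ^ (D - 1)) i₀ (X i₀ ^ D - C R)
  let q : σ → MvPolynomial σ K := update (fun i ↦ C (D : K)⁻¹ * pderiv i F) i₀
    (F - ∑ j ∈ Finset.univ.erase i₀, X j * (C (D : K)⁻¹ * pderiv j F))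
  have hp (i : σ) : (p i - X i ^ e i).totalDegree < e i := by
    rcases eq_or_ne i i₀ with rfl | hi
    · simpa [p, e] using pos_of_gt hD₁
    · simpa [p, e, hi] using hD₁
  have hq (i : σ) : (q i).totalDegree ≤ e i := by
    rcases eq_or_ne i i₀ with rfl | hi
    · simp only [q, e, update_self]
      refine (totalDegree_sub _ _).trans (max_le hF (totalDegree_finsetSum_le fun j _ ↦ ?_))
      have := totalDegree_mul (X j) (C (D : K)⁻¹ * pderiv j F)
      have : (X j : MvPolynomial σ K).totalDegree = 1 := totalDegree_X j
      have := hpderiv j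
      omega
    · simpa [q, e, hi] using hpderiv i
  have hprod : ∏ i, e i = D * (D - 1) ^ (Fintype.card σ - 1) := by
    simp [e, Finset.prod_update_of_mem, Finset.card_sdiff]
  filter_upwards [eventually_cofinite_encard_zeros_le_prod hp hq] with t ht
  rw [← hprod]
  refine (Set.encard_le_encard fun x hx i ↦ ?_).trans ht
  rcases eq_or_ne i i₀ with rfl | hi
  · simpa only [p, q, update_self, map_add, map_sub, map_mul, map_pow, map_sum, eval_X, eval_C,
      smul_eval] using pow_sub_add_eq_zero_of_mem_coordCriticalSet hD hx
  · simpa [p, q, hi] using pow_add_eq_zero_of_mem_coordCriticalSet hD hx hi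

end CriticalPoints

section Counting

theorem two_mul_card_le_encard_iUnion {α β : Type*} {S : Finset α} {A : α → Set β}
    (hdisj : (S : Set α).PairwiseDisjoint A) (hA : ∀ v ∈ S, (A v).Nontrivial) :
    (2 * S.card : ℕ) ≤ (⋃ v ∈ S, A v).encard := by
  classical
  induction S using Finset.induction_on with
  | empty => simp
  | insert v S hv ih =>
    rw [Finset.coe_insert, Set.pairwiseDisjoint_insert_of_notMem (by simpa using hv)] at hdisj
    have hunion : Disjoint (A v) (⋃ w ∈ S, A w) := Set.disjoint_iUnion₂_right.mpr hdisj.2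
    have htwo : 2 ≤ (A v).encard :=
      Order.add_one_le_of_lt (Set.one_lt_encard_iff_nontrivial.mpr (hA v (S.mem_insert_self v)))
    calc ((2 * (insert v S).card : ℕ) : ℕ∞) = 2 + (2 * S.card : ℕ) := by
          rw [Finset.card_insert_of_notMem hv]
          push_cast
          ring
      _ ≤ (A v).encard + (⋃ w ∈ S, A w).encard :=
          add_le_add htwo (ih hdisj.1 fun w hw ↦ hA w (Finset.mem_insert_of_mem hw))
      _ = (⋃ w ∈ insert v S, A w).encard := by
          rw [Finset.set_biUnion_insert, Set.encard_union_eq hunion]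

variable {σ : Type*} {i₀ : σ} {D : ℕ}

section CoordCriticalSet

variable [Finite σ] {G : MvPolynomial σ ℝ} {x p : σ → ℝ} {c : ℝ}

theorem mem_coordCriticalSet_of_isMaxOn (hc : c ≠ 0)
    (hp : p ∈ connectedComponentIn {z | eval z G ≤ 0} x)
    (hmax : IsMaxOn (fun z ↦ c * z i₀) (connectedComponentIn {z | eval z G ≤ 0} x) p) :
    p ∈ coordCriticalSet i₀ G := by
  classical
  have := Fintype.ofFinite σ
  let ℓ : Dual ℝ (σ → ℝ) := c • LinearMap.proj i₀
  have hℓ : ℓ ≠ 0 := fun h ↦ hc (by simpa [ℓ] using LinearMap.congr_fun h (Pi.single i₀ 1))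
  have hGp : eval p G = 0 :=
    eq_zero_of_isMaxOn_connectedComponentIn_sublevel (G := (eval · G)) G.continuous_eval hℓ hp hmax
  have hker := ker_le_ker_of_isMaxOn_connectedComponentIn_sublevel
    (hasFDerivAt_mvPolynomial_eval G p) hGp hℓ hp hmax
  refine ⟨hGp, fun i hi ↦ ?_⟩
  have hsingle : Pi.single i 1 ∈ ℓ.ker := by simp [ℓ, hi.symm]
  simpa [Pi.single_apply] using hker hsingle

theorem nontrivial_coordCriticalSet_inter_connectedComponentIn (hx : eval x G < 0)
    (hcomp : IsCompact (connectedComponentIn {z | eval z G ≤ 0} x)) :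
    (coordCriticalSet i₀ G ∩ connectedComponentIn {z | eval z G ≤ 0} x).Nontrivial := by
  have hxK : x ∈ connectedComponentIn {z | eval z G ≤ 0} x := mem_connectedComponentIn hx.le
  have hexists (c : ℝ) : ∃ p ∈ connectedComponentIn {z | eval z G ≤ 0} x,
      IsMaxOn (fun z ↦ c * z i₀) (connectedComponentIn {z | eval z G ≤ 0} x) p :=
    hcomp.exists_isMaxOn ⟨x, hxK⟩ (by fun_prop)
  obtain ⟨p, hp, hpmax⟩ := hexists 1
  obtain ⟨q, hq, hqmax⟩ := hexists (-1)
  refine ⟨p, ⟨mem_coordCriticalSet_of_isMaxOn one_ne_zero hp hpmax, hp⟩,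
    q, ⟨mem_coordCriticalSet_of_isMaxOn (by norm_num) hq hqmax, hq⟩, ?_⟩
  rintro rfl
  -- The coordinate is constant on the component, so `x` maximizes it too and `G` vanishes at `x`.
  refine hx.ne (mem_coordCriticalSet_of_isMaxOn (i₀ := i₀) one_ne_zero hxK fun z hz ↦ ?_).1
  have hz_le : 1 * z i₀ ≤ 1 * p i₀ := hpmax hz
  have hx_ge : -1 * x i₀ ≤ -1 * p i₀ := hqmax hxK
  change 1 * z i₀ ≤ 1 * x i₀
  linarith

theorem two_mul_card_le_encard_coordCriticalSet (hcomp : IsCompact {z | eval z G ≤ 0})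
    (i₀ : σ) {S : Finset (σ → ℝ)} (hS : ∀ x ∈ S, eval x G < 0)
    (hinj : Set.InjOn (connectedComponentIn {z | eval z G ≤ 0}) S) :
    (2 * S.card : ℕ) ≤ (coordCriticalSet i₀ G).encard := by
  have hdisj : (S : Set (σ → ℝ)).PairwiseDisjoint fun x ↦
      coordCriticalSet i₀ G ∩ connectedComponentIn {z | eval z G ≤ 0} x := fun x hx y hy hxy ↦
    (disjoint_connectedComponentIn (hinj.ne hx hy hxy)).mono Set.inter_subset_right
      Set.inter_subset_right
  calc ((2 * S.card : ℕ) : ℕ∞)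
      ≤ (⋃ x ∈ S, coordCriticalSet i₀ G ∩ connectedComponentIn {z | eval z G ≤ 0} x).encard :=
        two_mul_card_le_encard_iUnion hdisj fun x hx ↦
          nontrivial_coordCriticalSet_inter_connectedComponentIn (hS x hx)
            (hcomp.of_isClosed_subset (isClosed_connectedComponentIn hcomp.isClosed x)
              (connectedComponentIn_subset _ _))
    _ ≤ (coordCriticalSet i₀ G).encard :=
        Set.encard_le_encard (Set.iUnion₂_subset fun x _ ↦ Set.inter_subset_left)

end CoordCriticalSet

variable [Fintype σ] {F : MvPolynomial σ ℝ} {R : ℝ}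

theorem isCompact_setOf_sum_pow_le (hD : Even D) (hD₀ : D ≠ 0) (R : ℝ) :
    IsCompact {x : σ → ℝ | ∑ i, x i ^ D ≤ R} := by
  refine (isCompact_closedBall (0 : σ → ℝ) (max 1 R)).of_isClosed_subset
    (isClosed_le (by fun_prop) continuous_const) fun x hx ↦ ?_
  refine mem_closedBall_zero_iff.mpr ((pi_norm_le_iff_of_nonneg (by positivity)).mpr fun i ↦ ?_)
  rcases le_total ‖x i‖ 1 with h | h
  · exact le_max_of_le_left h
  · refine le_max_of_le_right ?_
    calc ‖x i‖ ≤ ‖x i‖ ^ D := le_self_pow₀ h hD₀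
      _ = x i ^ D := hD.pow_abs (x i)
      _ ≤ ∑ i, x i ^ D :=
        Finset.single_le_sum (fun j _ ↦ hD.pow_nonneg (x j)) (Finset.mem_univ i)
      _ ≤ R := hx

theorem antitone_setOf_eval_penalization_nonpos (hF : ∀ x, 0 ≤ eval x F) :
    Antitone fun t : ℝ ↦ {x | eval x (penalization D R F t) ≤ 0} := by
  intro s t hst x hx
  rw [Set.mem_ofPred_eq, eval_penalization] at hx ⊢
  nlinarith [mul_le_mul_of_nonneg_right hst (hF x)]

theorem isCompact_setOf_eval_penalization_nonpos (hD : Even D) (hD₀ : D ≠ 0)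
    (hF : ∀ x, 0 ≤ eval x F) {t : ℝ} (ht : 0 ≤ t) :
    IsCompact {x | eval x (penalization D R F t) ≤ 0} :=
  (isCompact_setOf_sum_pow_le hD hD₀ R).of_isClosed_subset
    (isClosed_le (continuous_eval _) continuous_const) fun x hx ↦ by
      simpa [eval_penalization] using antitone_setOf_eval_penalization_nonpos hF ht hx

theorem iInter_setOf_eval_penalization_nonpos (hF : ∀ x, 0 ≤ eval x F) :
    ⋂ n : ℕ, {x | eval x (penalization D R F n) ≤ 0} =
      {x | eval x F = 0 ∧ ∑ i, x i ^ D ≤ R} := by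
  ext x
  simp only [Set.mem_iInter, Set.mem_ofPred_eq, eval_penalization]
  constructor
  · intro h
    refine ⟨(hF x).antisymm' (not_lt.mp fun hpos ↦ ?_), by simpa using h 0⟩
    obtain ⟨n, hn⟩ := exists_lt_nsmul hpos (R - ∑ i, x i ^ D)
    rw [nsmul_eq_mul] at hn
    linarith [h n]
  · rintro ⟨hFx, hxR⟩ n
    simpa [hFx] using hxR

theorem two_mul_card_le_of_injOn_connectedComponentIn [Nonempty σ] (hD : Even D) (hD₀ : D ≠ 0)
    (hF : ∀ x, 0 ≤ eval x F) (hdeg : F.totalDegree ≤ D) {S : Finset (σ → ℝ)}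
    (hS : ↑S ⊆ {x | eval x F = 0}) (hinj : Set.InjOn (connectedComponentIn {x | eval x F = 0}) S) :
    2 * S.card ≤ D * (D - 1) ^ (Fintype.card σ - 1) := by
  obtain ⟨i₀⟩ := ‹Nonempty σ›
  obtain ⟨R, hR⟩ : ∃ R : ℝ, ∀ x ∈ S, ∑ i, x i ^ D < R := by
    obtain ⟨M, hM⟩ := (S.finite_toSet.image fun x ↦ ∑ i, x i ^ D).bddAbove
    exact ⟨M + 1, fun x hx ↦ (hM ⟨x, hx, rfl⟩).trans_lt (lt_add_one M)⟩
  let K (n : ℕ) : Set (σ → ℝ) := {x | eval x (penalization D R F n) ≤ 0}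
  have hK_anti : Antitone K :=
    (antitone_setOf_eval_penalization_nonpos hF).comp_monotone Nat.mono_cast
  have hK_comp (n : ℕ) : IsCompact (K n) :=
    isCompact_setOf_eval_penalization_nonpos hD hD₀ hF n.cast_nonneg
  have hK_iInter : ⋂ n, K n = {x | eval x F = 0 ∧ ∑ i, x i ^ D ≤ R} :=
    iInter_setOf_eval_penalization_nonpos hF
  have hS_iInter : ↑S ⊆ ⋂ n, K n := hK_iInter ▸ fun x hx ↦ ⟨hS hx, (hR x hx).le⟩
  have hinj_iInter : Set.InjOn (connectedComponentIn (⋂ n, K n)) S :=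
    injOn_connectedComponentIn_mono hS_iInter (hK_iInter ▸ fun x hx ↦ hx.1) hinj
  have hcount : ∀ᶠ n : ℕ in atTop, (coordCriticalSet i₀ (penalization D R F (n : ℝ))).encard ≤
      (D * (D - 1) ^ (Fintype.card σ - 1) : ℕ) :=
    ((eventually_cofinite_encard_coordCriticalSet_le (by exact_mod_cast hD₀)
      (by obtain ⟨m, rfl⟩ := hD; omega) hdeg R i₀).filter_mono atTop_le_cofinite).natCast_atTop
  have hseparate : ∀ᶠ n in atTop, Set.InjOn (connectedComponentIn (K n)) S :=
    eventually_injOn_connectedComponentIn hK_anti hK_comp hS_iInter hinj_iInter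
  obtain ⟨n, hn_inj, hn_count⟩ := (hseparate.and hcount).exists
  have hneg (x : σ → ℝ) (hx : x ∈ S) : eval x (penalization D R F (n : ℝ)) < 0 := by
    have hFx : eval x F = 0 := hS hx
    simpa [eval_penalization, hFx] using hR x hx
  exact_mod_cast (two_mul_card_le_encard_coordCriticalSet (hK_comp n) i₀ hneg hn_inj).trans hn_count

end Counting

theorem milnor_bound_connected_components_general {σ ι : Type*} [Fintype σ] [Finite ι] {d : ℕ}
    (hd : 1 ≤ d) (θ : ι → MvPolynomial σ ℝ) (hdeg : ∀ j, (θ j).totalDegree ≤ d) (y : ι → ℝ) :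
    Finite (ConnectedComponents ↥((fun x j ↦ eval x (θ j)) ⁻¹' {y})) ∧
      Nat.card (ConnectedComponents ↥((fun x j ↦ eval x (θ j)) ⁻¹' {y})) ≤
        d * (2 * d - 1) ^ (Fintype.card σ - 1) := by
  have := Fintype.ofFinite ι
  let F : MvPolynomial σ ℝ := ∑ j, (θ j - C (y j)) ^ 2
  have hF_eval (x : σ → ℝ) : eval x F = ∑ j, (eval x (θ j) - y j) ^ 2 := by simp [F]
  have hF_nonneg (x : σ → ℝ) : 0 ≤ eval x F := by rw [hF_eval]; positivity
  have hF_deg : F.totalDegree ≤ 2 * d := totalDegree_finsetSum_le fun j _ ↦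
    (totalDegree_pow _ 2).trans
      (Nat.mul_le_mul_left 2 ((totalDegree_sub_C_le _ _).trans (hdeg j)))
  have hzero : (fun x j ↦ eval x (θ j)) ⁻¹' {y} = {x | eval x F = 0} := by
    ext x
    simp [hF_eval, Finset.sum_eq_zero_iff_of_nonneg, sq_nonneg, sub_eq_zero, funext_iff]
  rw [hzero]
  refine finite_and_card_connectedComponents_le fun S hS hinj ↦ ?_
  rcases isEmpty_or_nonempty σ with hσ | hσ
  · calc S.card ≤ 1 := Finset.card_le_one_of_subsingleton S
      _ ≤ d * (2 * d - 1) ^ (Fintype.card σ - 1) := by simpa using hd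
  · have := two_mul_card_le_of_injOn_connectedComponentIn (even_two_mul d) (by omega) hF_nonneg
      hF_deg hS hinj
    rw [mul_assoc] at this
    exact Nat.le_of_mul_le_mul_left this two_pos

/-- Milnor–Oleinik–Petrovsky–Thom bound:
If `f = (θ₁, …, θ_r) : ℝ^k → ℝ^r` has polynomial components of total degree at most `d ≥ 1`,
and `y` is a regular value of `f`, then the preimage `f⁻¹(y)` has at most `d·(2d)^(k-1)`
connected components. -/
theorem milnor_bound_connected_components
    (k r d : ℕ) (hd : 1 ≤ d)
    (θ : Fin r → MvPolynomial (Fin k) ℝ)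
    (hdeg : ∀ j, (θ j).totalDegree ≤ d)
    (f : (Fin k → ℝ) → (Fin r → ℝ))
    (hf : ∀ w j, f w j = MvPolynomial.eval w (θ j))
    (y : Fin r → ℝ)
    (hreg : ∀ x ∈ f ⁻¹' {y}, Function.Surjective (fderiv ℝ f x)) :
    Finite (ConnectedComponents ↥(f ⁻¹' {y})) ∧
      Nat.card (ConnectedComponents ↥(f ⁻¹' {y})) ≤ d * (2 * d) ^ (k - 1) := by
  obtain rfl : f = fun w j ↦ eval w (θ j) := funext₂ hf
  obtain ⟨hfin, hcard⟩ := milnor_bound_connected_components_general hd θ hdeg y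
  rw [Fintype.card_fin] at hcard
  exact ⟨hfin, hcard.trans (Nat.mul_le_mul_left d (Nat.pow_le_pow_left (Nat.sub_le _ 1) _))⟩
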